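/- Let c, φ : [0,a] → ℝ be continuously differentiable with c(u) > 0 and φ'(u) > 0 for all u, and let f, z : [0,b] → ℝ be continuously differentiable with z'(v) > 0 for all v. Put ξ(u) = c(u)·(cos φ(u), sin φ(u)). Fix t ∈ ℝ such that c(u)² + t > 0 and c(u)⁴φ'(u)² + t·(c(u)²φ'(u)² + c'(u)²) ≥ 0 for all u, and z'(v)² − t·f'(v)² ≥ 0 for all v. Define φᵗ(u) = φ(0) + ∫₀ᵘ √( c(w)⁴φ'(w)² + t(c(w)²φ'(w)² + c'(w)²) ) / (c(w)² + t) dw, zᵗ(v) = z(0) + ∫₀ᵛ √( z'(w)² − t f'(w)² ) dw, and σᵗ(u,v) = ( f(v)√(c(u)²+t)·cos φᵗ(u), f(v)√(c(u)²+t)·sin φᵗ(u), zᵗ(v) ). Then for all (u,v): ‖σᵗ_u(u,v)‖² = f(v)²·(c'(u)² + c(u)²φ'(u)²) = f(v)²‖ξ'(u)‖², ⟪σᵗ_u(u,v), σᵗ_v(u,v)⟫ = f(v)f'(v)·c(u)c'(u) = f(v)f'(v)·⟪ξ'(u), ξ(u)⟫, and ‖σᵗ_v(u,v)‖² = f'(v)²c(u)²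 + z'(v)² = f'(v)²‖ξ(u)‖² + z'(v)². In particular the first fundamental form of σᵗ coincides with that of the axial T-surface σ⁰(u,v) = (f(v)ξ(u), z(v)). -/

import Mathlib

open Real Set

/-- A vector in Euclidean space `ℝ³` given by its three coordinates. -/
noncomputable def e3 (x y z : ℝ) : EuclideanSpace ℝ (Fin 3) := !₂[x, y, z]

/-!
The first fundamental form of a surface `(f(v) r(u) (cos ψ(u), sin ψ(u)), z(v))` depends on the
planar curve only through its squared speed `r'² + r²ψ'²`, the product `r r'` and `r²`.
Replacing `r = c` by `r = √(c² + t)` leaves `r r'` unchanged; requiring the same squared speed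
determines `ψ'` up to sign, and subtracting `t f'²` from `z'²` compensates the extra
term in `‖σ_v‖²`.
-/

/-- The first fundamental form at `(u, v)` of a parametrized surface `σ`, in terms of its partial
derivatives within the parameter intervals `I` and `J`: its coefficients are `E`, `F` and `G`. -/
def HasFirstFundamentalFormWithinAt {V : Type*} [NormedAddCommGroup V] [InnerProductSpace ℝ V]
    (σ : ℝ → ℝ → V) (I J : Set ℝ) (u v E F G : ℝ) : Prop :=
  ∃ su sv : V,
    HasDerivWithinAt (fun u' => σ u' v) su I u ∧
    HasDerivWithinAt (fun v' => σ u v') sv J v ∧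
    ‖su‖ ^ 2 = E ∧ inner ℝ su sv = F ∧ ‖sv‖ ^ 2 = G

/-- The axial T-surface `(f(v)ξ(u), z(v))` about the `z`-axis, where the planar curve `ξ` is
given by its polar coordinates `r` and `ψ`. -/
noncomputable def axialTSurface (f r ψ z : ℝ → ℝ) (u v : ℝ) : EuclideanSpace ℝ (Fin 3) :=
  e3 (f v * r u * cos (ψ u)) (f v * r u * sin (ψ u)) (z v)

/-- The angular speed `(φᵗ)'` of the deformed planar curve, at a point where the original curve
has radius `c`, radial speed `c'` and angular speed `ω`. -/
noncomputable def deformedAngularSpeed (t c c' ω : ℝ) : ℝ :=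
  √(c ^ 4 * ω ^ 2 + t * (c ^ 2 * ω ^ 2 + c' ^ 2)) / (c ^ 2 + t)

theorem inner_e3 (x y z x' y' z' : ℝ) :
    inner ℝ (e3 x y z) (e3 x' y' z') = x * x' + y * y' + z * z' := by
  simp [e3, PiLp.inner_apply, Fin.sum_univ_three, mul_comm]

theorem norm_e3_sq (x y z : ℝ) : ‖e3 x y z‖ ^ 2 = x ^ 2 + y ^ 2 + z ^ 2 := by
  rw [← real_inner_self_eq_norm_sq, inner_e3]
  ring

theorem hasDerivWithinAt_e3 {x y z : ℝ → ℝ} {x' y' z' u : ℝ} {s : Set ℝ}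
    (hx : HasDerivWithinAt x x' s u) (hy : HasDerivWithinAt y y' s u)
    (hz : HasDerivWithinAt z z' s u) :
    HasDerivWithinAt (fun w => e3 (x w) (y w) (z w)) (e3 x' y' z') s u := by
  have hcoord : HasDerivWithinAt (fun w => ![x w, y w, z w]) ![x', y', z'] s u := by
    rw [hasDerivWithinAt_pi]
    intro i
    fin_cases i
    exacts [hx, hy, hz]
  exact (PiLp.hasFDerivAt_toLp 2 _).comp_hasDerivWithinAt u hcoord

theorem hasDerivWithinAt_const_add_integral {V : Type*} [NormedAddCommGroup V] [NormedSpace ℝ V]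
    [CompleteSpace V] {g : ℝ → V} {a b x₀ x : ℝ} (k : V) (hg : ContinuousOn g (Icc a b))
    (hx₀ : x₀ ∈ Icc a b) (hx : x ∈ Icc a b) :
    HasDerivWithinAt (fun y => k + ∫ w in x₀..y, g w) (g x) (Icc a b) x := by
  have : Fact (x ∈ Icc a b) := ⟨hx⟩
  have hint : IntervalIntegrable g MeasureTheory.volume x₀ x :=
    (hg.mono (uIcc_subset_Icc hx₀ hx)).intervalIntegrable
  exact (intervalIntegral.integral_hasDerivWithinAt_right hint
    (hg.stronglyMeasurableAtFilter_nhdsWithin measurableSet_Icc x) (hg x hx)).const_add k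

theorem hasDerivWithinAt_sqrt_sq_add {c : ℝ → ℝ} {c' t u : ℝ} {s : Set ℝ}
    (hc : HasDerivWithinAt c c' s u) (ht : c u ^ 2 + t ≠ 0) :
    HasDerivWithinAt (fun w => √(c w ^ 2 + t)) (c u * c' / √(c u ^ 2 + t)) s u := by
  refine (((hc.fun_pow 2).add_const t).sqrt ht).congr_deriv ?_
  push_cast
  rw [pow_one, mul_assoc, mul_div_mul_left _ _ two_ne_zero]

theorem continuousOn_deformedAngularSpeed {c c' ω : ℝ → ℝ} {t : ℝ} {s : Set ℝ}
    (hc : ContinuousOn c s) (hc' : ContinuousOn c' s) (hω : ContinuousOn ω s)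
    (ht : ∀ u ∈ s, c u ^ 2 + t ≠ 0) :
    ContinuousOn (fun u => deformedAngularSpeed t (c u) (c' u) (ω u)) s :=
  ContinuousOn.div (by fun_prop) (by fun_prop) ht

theorem sq_speed_deformed {t c c' ω : ℝ} (ht : 0 < c ^ 2 + t)
    (hω : 0 ≤ c ^ 4 * ω ^ 2 + t * (c ^ 2 * ω ^ 2 + c' ^ 2)) :
    (c * c' / √(c ^ 2 + t)) ^ 2 + √(c ^ 2 + t) ^ 2 * deformedAngularSpeed t c c' ω ^ 2 =
      c' ^ 2 + c ^ 2 * ω ^ 2 := by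
  rw [deformedAngularSpeed, div_pow, div_pow, sq_sqrt ht.le, sq_sqrt hω]
  field_simp
  ring

theorem axialTSurface_hasFirstFundamentalFormWithinAt {f r ψ z : ℝ → ℝ}
    {f' r' ψ' z' u v : ℝ} {I J : Set ℝ}
    (hf : HasDerivWithinAt f f' J v) (hr : HasDerivWithinAt r r' I u)
    (hψ : HasDerivWithinAt ψ ψ' I u) (hz : HasDerivWithinAt z z' J v) :
    HasFirstFundamentalFormWithinAt (axialTSurface f r ψ z) I J u v
      (f v ^ 2 * (r' ^ 2 + r u ^ 2 * ψ' ^ 2)) (f v * f' * (r u * r'))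
      (f' ^ 2 * r u ^ 2 + z' ^ 2) := by
  have hsu := hasDerivWithinAt_e3 ((hr.const_mul (f v)).mul hψ.cos)
    ((hr.const_mul (f v)).mul hψ.sin) (hasDerivWithinAt_const u I (z v))
  have hsv := hasDerivWithinAt_e3 ((hf.mul_const (r u)).mul_const (cos (ψ u)))
    ((hf.mul_const (r u)).mul_const (sin (ψ u))) hz
  have hcs := cos_sq_add_sin_sq (ψ u)
  refine ⟨_, _, hsu, hsv, ?_, ?_, ?_⟩
  · rw [norm_e3_sq]
    linear_combination f v ^ 2 * (r' ^ 2 + r u ^ 2 * ψ' ^ 2) * hcs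
  · rw [inner_e3]
    linear_combination f v * f' * (r u * r') * hcs
  · rw [norm_e3_sq]
    linear_combination f' ^ 2 * r u ^ 2 * hcs

theorem deformed_axialTSurface_hasFirstFundamentalFormWithinAt {f c φt zt : ℝ → ℝ}
    {f' c' ω z' t u v : ℝ} {I J : Set ℝ}
    (hf : HasDerivWithinAt f f' J v) (hc : HasDerivWithinAt c c' I u)
    (hφt : HasDerivWithinAt φt (deformedAngularSpeed t (c u) c' ω) I u)
    (hzt : HasDerivWithinAt zt (√(z' ^ 2 - t * f' ^ 2)) J v)
    (htc : 0 < c u ^ 2 + t)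
    (htω : 0 ≤ c u ^ 4 * ω ^ 2 + t * (c u ^ 2 * ω ^ 2 + c' ^ 2))
    (htz : 0 ≤ z' ^ 2 - t * f' ^ 2) :
    HasFirstFundamentalFormWithinAt (axialTSurface f (fun w => √(c w ^ 2 + t)) φt zt) I J u v
      (f v ^ 2 * (c' ^ 2 + c u ^ 2 * ω ^ 2)) (f v * f' * (c u * c'))
      (f' ^ 2 * c u ^ 2 + z' ^ 2) := by
  have hF : √(c u ^ 2 + t) * (c u * c' / √(c u ^ 2 + t)) = c u * c' :=
    mul_div_cancel₀ _ (sqrt_pos.2 htc).ne'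
  have hG : f' ^ 2 * √(c u ^ 2 + t) ^ 2 + √(z' ^ 2 - t * f' ^ 2) ^ 2 =
      f' ^ 2 * c u ^ 2 + z' ^ 2 := by
    rw [sq_sqrt htc.le, sq_sqrt htz]
    ring
  rw [← hF, ← sq_speed_deformed htc htω, ← hG]
  exact axialTSurface_hasFirstFundamentalFormWithinAt hf
    (hasDerivWithinAt_sqrt_sq_add hc htc.ne') hφt hzt

theorem stmt_15_general {a₁ a₂ b₁ b₂ u₀ v₀ t u v : ℝ} {c φ c' φ' f z f' z' : ℝ → ℝ}
    (hu₀ : u₀ ∈ Icc a₁ a₂) (hv₀ : v₀ ∈ Icc b₁ b₂)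
    (hc : ∀ u ∈ Icc a₁ a₂, HasDerivWithinAt c (c' u) (Icc a₁ a₂) u)
    (hφ : ∀ u ∈ Icc a₁ a₂, HasDerivWithinAt φ (φ' u) (Icc a₁ a₂) u)
    (hc' : ContinuousOn c' (Icc a₁ a₂)) (hφ' : ContinuousOn φ' (Icc a₁ a₂))
    (hf : ∀ v ∈ Icc b₁ b₂, HasDerivWithinAt f (f' v) (Icc b₁ b₂) v)
    (hz : ∀ v ∈ Icc b₁ b₂, HasDerivWithinAt z (z' v) (Icc b₁ b₂) v)
    (hf' : ContinuousOn f' (Icc b₁ b₂)) (hz' : ContinuousOn z' (Icc b₁ b₂))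
    (htc : ∀ u ∈ Icc a₁ a₂, 0 < c u ^ 2 + t)
    (htφ : ∀ u ∈ Icc a₁ a₂,
      0 ≤ c u ^ 4 * φ' u ^ 2 + t * (c u ^ 2 * φ' u ^ 2 + c' u ^ 2))
    (htz : ∀ v ∈ Icc b₁ b₂, 0 ≤ z' v ^ 2 - t * f' v ^ 2)
    (hu : u ∈ Icc a₁ a₂) (hv : v ∈ Icc b₁ b₂) :
    let E := f v ^ 2 * (c' u ^ 2 + c u ^ 2 * φ' u ^ 2)
    let F := f v * f' v * (c u * c' u)
    let G := f' v ^ 2 * c u ^ 2 + z' v ^ 2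
    HasFirstFundamentalFormWithinAt
        (axialTSurface f (fun w => √(c w ^ 2 + t))
          (fun x => φ u₀ + ∫ w in u₀..x, deformedAngularSpeed t (c w) (c' w) (φ' w))
          (fun y => z v₀ + ∫ w in v₀..y, √(z' w ^ 2 - t * f' w ^ 2)))
        (Icc a₁ a₂) (Icc b₁ b₂) u v E F G ∧
      HasFirstFundamentalFormWithinAt (axialTSurface f c φ z)
        (Icc a₁ a₂) (Icc b₁ b₂) u v E F G := by
  have hφt := hasDerivWithinAt_const_add_integral (φ u₀)
    (continuousOn_deformedAngularSpeed (HasDerivWithinAt.continuousOn hc) hc' hφ'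
      fun x hx => (htc x hx).ne') hu₀ hu
  have hzt := hasDerivWithinAt_const_add_integral (g := fun w => √(z' w ^ 2 - t * f' w ^ 2))
    (z v₀) (by fun_prop) hv₀ hv
  exact ⟨deformed_axialTSurface_hasFirstFundamentalFormWithinAt (hf v hv) (hc u hu) hφt hzt
      (htc u hu) (htφ u hu) (htz v hv),
    axialTSurface_hasFirstFundamentalFormWithinAt (hf v hv) (hc u hu) (hφ u hu) (hz v hv)⟩

/-- **Theorem 5.5.** The explicit isometric deformation of an axial T-surface
`σ⁰(u,v) = (f(v)ξ(u), z(v))`, `ξ(u) = c(u)(cos φ(u), sin φ(u))`: the deformed surface `σᵗ`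
has first fundamental form `E = f²(c'² + c²φ'²) = f²‖ξ'‖²`, `F = f f' c c' = f f' ⟪ξ', ξ⟫`,
`G = f'²c² + z'² = f'²‖ξ‖² + z'²`, i.e. the same as `σ⁰`. -/
theorem stmt_15 (a b : ℝ)
    (c φ c' φ' f z f' z' : ℝ → ℝ)
    (hc : ∀ u ∈ Icc 0 a, HasDerivWithinAt c (c' u) (Icc 0 a) u)
    (hφ : ∀ u ∈ Icc 0 a, HasDerivWithinAt φ (φ' u) (Icc 0 a) u)
    (hc' : ContinuousOn c' (Icc 0 a)) (hφ'c : ContinuousOn φ' (Icc 0 a))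
    (hcpos : ∀ u ∈ Icc 0 a, 0 < c u) (hφ'pos : ∀ u ∈ Icc 0 a, 0 < φ' u)
    (hf : ∀ v ∈ Icc 0 b, HasDerivWithinAt f (f' v) (Icc 0 b) v)
    (hz : ∀ v ∈ Icc 0 b, HasDerivWithinAt z (z' v) (Icc 0 b) v)
    (hf' : ContinuousOn f' (Icc 0 b)) (hz' : ContinuousOn z' (Icc 0 b))
    (hz'pos : ∀ v ∈ Icc 0 b, 0 < z' v)
    (t : ℝ)
    (htc : ∀ u ∈ Icc 0 a, 0 < c u ^ 2 + t)
    (htφ : ∀ u ∈ Icc 0 a,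
      0 ≤ c u ^ 4 * φ' u ^ 2 + t * (c u ^ 2 * φ' u ^ 2 + c' u ^ 2))
    (htz : ∀ v ∈ Icc 0 b, 0 ≤ z' v ^ 2 - t * f' v ^ 2)
    (φt zt : ℝ → ℝ)
    (hφt : ∀ u, φt u = φ 0 + ∫ w in (0:ℝ)..u,
        Real.sqrt (c w ^ 4 * φ' w ^ 2 + t * (c w ^ 2 * φ' w ^ 2 + c' w ^ 2)) / (c w ^ 2 + t))
    (hzt : ∀ v, zt v = z 0 + ∫ w in (0:ℝ)..v, Real.sqrt (z' w ^ 2 - t * f' w ^ 2))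
    (σ : ℝ → ℝ → EuclideanSpace ℝ (Fin 3))
    (hσ : ∀ u v, σ u v =
      e3 (f v * Real.sqrt (c u ^ 2 + t) * cos (φt u))
         (f v * Real.sqrt (c u ^ 2 + t) * sin (φt u))
         (zt v)) :
    ∀ u ∈ Icc 0 a, ∀ v ∈ Icc 0 b,
      ∃ su sv : EuclideanSpace ℝ (Fin 3),
        HasDerivWithinAt (fun u' => σ u' v) su (Icc 0 a) u ∧
        HasDerivWithinAt (fun v' => σ u v') sv (Icc 0 b) v ∧
        ‖su‖ ^ 2 = f v ^ 2 * (c' u ^ 2 + c u ^ 2 * φ' u ^ 2) ∧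
        (inner ℝ su sv : ℝ) = f v * f' v * (c u * c' u) ∧
        ‖sv‖ ^ 2 = f' v ^ 2 * c u ^ 2 + z' v ^ 2 := by
  intro u hu v hv
  obtain rfl : σ = axialTSurface f (fun w => √(c w ^ 2 + t)) φt zt :=
    funext₂ hσ
  obtain rfl := funext hφt
  obtain rfl := funext hzt
  exact (stmt_15_general (left_mem_Icc.2 (hu.1.trans hu.2)) (left_mem_Icc.2 (hv.1.trans hv.2))
    hc hφ hc' hφ'c hf hz hf' hz' htc htφ htz hu hv).1
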